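/- Let n be a natural number and a, b real numbers. For every smooth function U : ℝⁿ × ℝ → ℝ and every point of the open upper half-space H = {(x, y) : y > 0}, one has the swap identity Δ_a( Δ_b U ) = Δ_{b+2}( Δ_{a−2} U ). In particular Δ_m(Δ_m U) = Δ_{m+2}(Δ_{m−2} U) for every real m. -/

import Mathlib

/-!
With `y` the height, `D = ∂/∂y` and `Δ` the Euclidean Laplacian, the Leibniz rule gives
`Δ (y⁻¹ V) = y⁻¹ ΔV - 2 y⁻² DV + 2 y⁻³ V`. Applying this to `V = DU` and using that `D` and `Δ`
commute on smooth functions, one finds (`wLap_wLap`)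
`Δ_a (Δ_b U) = Δ² U + (a + b) y⁻¹ Δ D U + b (a - 2) (y⁻² D² U - y⁻³ D U)`.
The right-hand side only depends on `a + b` and `b (a - 2)`, and both are invariant
under `(a, b) ↦ (b + 2, a - 2)`.
-/

/-- The upper half-space model `ℝⁿ × ℝ`. -/
abbrev UHS (n : ℕ) := EuclideanSpace ℝ (Fin n) × ℝ

/-- The vertical unit vector `(0, 1)`. -/
noncomputable def eY (n : ℕ) : UHS n := (0, 1)

/-- Second directional derivative of `U` along `v` at `p`. -/
noncomputable def secondDirDeriv {n : ℕ} (v : UHS n) (U : UHS n → ℝ) (p : UHS n) : ℝ :=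
  fderiv ℝ (fun q => fderiv ℝ U q v) p v

/-- The Euclidean Laplacian of `ℝⁿ × ℝ`: the sum of all second pure partial derivatives. -/
noncomputable def euclLap {n : ℕ} (U : UHS n → ℝ) (p : UHS n) : ℝ :=
  (∑ i : Fin n, secondDirDeriv (EuclideanSpace.single i 1, 0) U p) +
    secondDirDeriv (eY n) U p

/-- The partial derivative `∂U/∂y` in the last coordinate. -/
noncomputable def dY {n : ℕ} (U : UHS n → ℝ) (p : UHS n) : ℝ := fderiv ℝ U p (eY n)

/-- The weighted Laplacian `Δ_a U = ΔU + a·y⁻¹·∂U/∂y`. -/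
noncomputable def wLap {n : ℕ} (a : ℝ) (U : UHS n → ℝ) (p : UHS n) : ℝ :=
  euclLap U p + a * (p.2)⁻¹ * dY U p

lemma contDiff_dirDeriv {n : ℕ} {U : UHS n → ℝ} (hU : ContDiff ℝ (⊤ : ℕ∞) U) (v : UHS n) :
    ContDiff ℝ (⊤ : ℕ∞) (fun q => fderiv ℝ U q v) :=
  (hU.fderiv_right (m := ((⊤ : ℕ∞) : WithTop ℕ∞)) le_rfl).clm_apply contDiff_const

lemma contDiff_secondDirDeriv {n : ℕ} {U : UHS n → ℝ} (hU : ContDiff ℝ (⊤ : ℕ∞) U)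
    (v : UHS n) : ContDiff ℝ (⊤ : ℕ∞) (secondDirDeriv v U) :=
  contDiff_dirDeriv (contDiff_dirDeriv hU v) v

lemma contDiff_euclLap {n : ℕ} {U : UHS n → ℝ} (hU : ContDiff ℝ (⊤ : ℕ∞) U) :
    ContDiff ℝ (⊤ : ℕ∞) (euclLap U) :=
  (ContDiff.sum fun _ _ => contDiff_secondDirDeriv hU _).add (contDiff_secondDirDeriv hU _)

lemma dirDeriv_comm {n : ℕ} {U : UHS n → ℝ} (hU : ContDiff ℝ (⊤ : ℕ∞) U) (v w p : UHS n) :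
    fderiv ℝ (fun q => fderiv ℝ U q v) p w = fderiv ℝ (fun q => fderiv ℝ U q w) p v := by
  have hd : DifferentiableAt ℝ (fderiv ℝ U) p :=
    (hU.fderiv_right (m := ((⊤ : ℕ∞) : WithTop ℕ∞)) le_rfl).differentiable (by simp) p
  have hs : IsSymmSndFDerivAt ℝ U p :=
    hU.contDiffAt.isSymmSndFDerivAt (by
      rw [minSmoothness_of_isRCLikeNormedField]
      exact WithTop.coe_le_coe.2 (le_top : (2 : ℕ∞) ≤ ⊤))
  have key (x y : UHS n) :
      fderiv ℝ (fun q => fderiv ℝ U q x) p y = fderiv ℝ (fderiv ℝ U) p y x := by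
    rw [fderiv_clm_apply hd (differentiableAt_const x)]
    simp
  rw [key, key]
  exact hs.eq w v

lemma dY_secondDirDeriv {n : ℕ} {U : UHS n → ℝ} (hU : ContDiff ℝ (⊤ : ℕ∞) U) (v p : UHS n) :
    dY (secondDirDeriv v U) p = secondDirDeriv v (dY U) p := by
  have h : (fun q => fderiv ℝ (fun q => fderiv ℝ U q v) q (eY n)) =
      fun q => fderiv ℝ (fun q => fderiv ℝ U q (eY n)) q v :=
    funext fun q => dirDeriv_comm hU v (eY n) q
  have h' := dirDeriv_comm (contDiff_dirDeriv hU v) v (eY n) p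
  rw [h] at h'
  exact h'

lemma dY_euclLap {n : ℕ} {U : UHS n → ℝ} (hU : ContDiff ℝ (⊤ : ℕ∞) U) (p : UHS n) :
    dY (euclLap U) p = euclLap (dY U) p := by
  have hd (v : UHS n) : DifferentiableAt ℝ (secondDirDeriv v U) p :=
    (contDiff_secondDirDeriv hU v).differentiable (by simp) p
  have h : HasFDerivAt (euclLap U)
      ((∑ i : Fin n, fderiv ℝ (secondDirDeriv (EuclideanSpace.single i 1, 0) U) p) +
        fderiv ℝ (secondDirDeriv (eY n) U) p) p :=
    (HasFDerivAt.fun_sum fun i _ => (hd _).hasFDerivAt).add (hd _).hasFDerivAt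
  unfold dY
  rw [h.fderiv, _root_.add_apply, _root_.sum_apply]
  unfold euclLap
  exact congrArg₂ (· + ·) (Finset.sum_congr rfl fun i _ => dY_secondDirDeriv hU _ p)
    (dY_secondDirDeriv hU _ p)

lemma hasFDerivAt_inv_height {n : ℕ} {q : UHS n} (hq : 0 < q.2) :
    HasFDerivAt (fun q : UHS n => (q.2)⁻¹)
      ((-((q.2 ^ 2)⁻¹)) • ContinuousLinearMap.snd ℝ (EuclideanSpace ℝ (Fin n)) ℝ) q :=
  (hasDerivAt_inv hq.ne').comp_hasFDerivAt q hasFDerivAt_snd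

/-- First-order Leibniz rule for `F + c y⁻¹ V`, the shape of `Δ_c U`. -/
lemma dirDeriv_add_inv {n : ℕ} {F V : UHS n → ℝ} (hF : ContDiff ℝ (⊤ : ℕ∞) F)
    (hV : ContDiff ℝ (⊤ : ℕ∞) V) (c : ℝ) (v : UHS n) {q : UHS n} (hq : 0 < q.2) :
    fderiv ℝ (fun q => F q + c * (q.2)⁻¹ * V q) q v =
      fderiv ℝ F q v + c * (q.2)⁻¹ * fderiv ℝ V q v
        - c * v.2 * ((q.2)⁻¹ * (q.2)⁻¹) * V q := by
  have dF := (hF.differentiable (by simp) q).hasFDerivAt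
  have dV := (hV.differentiable (by simp) q).hasFDerivAt
  refine (DFunLike.congr_fun
    (dF.add (((hasFDerivAt_inv_height hq).const_mul c).mul dV)).fderiv v).trans ?_
  simp
  ring

/-- Second-order Leibniz rule for `F + c y⁻¹ V`. -/
lemma secondDirDeriv_add_inv {n : ℕ} {F V : UHS n → ℝ} (hF : ContDiff ℝ (⊤ : ℕ∞) F)
    (hV : ContDiff ℝ (⊤ : ℕ∞) V) (c : ℝ) (v : UHS n) {p : UHS n} (hp : 0 < p.2) :
    secondDirDeriv v (fun q => F q + c * (q.2)⁻¹ * V q) p =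
      secondDirDeriv v F p + c * (p.2)⁻¹ * secondDirDeriv v V p
        - 2 * c * v.2 * (p.2)⁻¹ ^ 2 * fderiv ℝ V p v
        + 2 * c * v.2 ^ 2 * (p.2)⁻¹ ^ 3 * V p := by
  -- The first-order rule holds only where `y > 0`, which is a neighbourhood of `p`.
  have hev : (fun q => fderiv ℝ (fun q => F q + c * (q.2)⁻¹ * V q) q v) =ᶠ[nhds p]
      fun q => fderiv ℝ F q v + c * (q.2)⁻¹ * fderiv ℝ V q v
        - c * v.2 * ((q.2)⁻¹ * (q.2)⁻¹) * V q := by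
    filter_upwards [continuous_snd.continuousAt.eventually (lt_mem_nhds hp)] with q hq
    exact dirDeriv_add_inv hF hV c v hq
  have dF := ((contDiff_dirDeriv hF v).differentiable (by simp) p).hasFDerivAt
  have dV := (hV.differentiable (by simp) p).hasFDerivAt
  have dV' := ((contDiff_dirDeriv hV v).differentiable (by simp) p).hasFDerivAt
  have dr := hasFDerivAt_inv_height hp
  unfold secondDirDeriv
  rw [hev.fderiv_eq]
  refine (DFunLike.congr_fun ((dF.add ((dr.const_mul c).mul dV')).sub
    (((dr.mul dr).const_mul (c * v.2)).mul dV)).fderiv v).trans ?_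
  simp
  ring

lemma euclLap_add_inv {n : ℕ} {F V : UHS n → ℝ} (hF : ContDiff ℝ (⊤ : ℕ∞) F)
    (hV : ContDiff ℝ (⊤ : ℕ∞) V) (c : ℝ) {p : UHS n} (hp : 0 < p.2) :
    euclLap (fun q => F q + c * (q.2)⁻¹ * V q) p =
      euclLap F p + c * (p.2)⁻¹ * euclLap V p
        - 2 * c * (p.2)⁻¹ ^ 2 * dY V p + 2 * c * (p.2)⁻¹ ^ 3 * V p := by
  unfold euclLap
  simp only [secondDirDeriv_add_inv hF hV c _ hp]
  simp [Finset.sum_add_distrib, ← Finset.mul_sum, eY, dY]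
  ring

/-- The composition of two weighted Laplacians, in a form that depends on the weights only through
`a + b` and `b (a - 2)`. -/
lemma wLap_wLap {n : ℕ} (a b : ℝ) {U : UHS n → ℝ} (hU : ContDiff ℝ (⊤ : ℕ∞) U)
    {p : UHS n} (hp : 0 < p.2) :
    wLap a (wLap b U) p = euclLap (euclLap U) p + (a + b) * (p.2)⁻¹ * euclLap (dY U) p
      + b * (a - 2) * ((p.2)⁻¹ ^ 2 * dY (dY U) p - (p.2)⁻¹ ^ 3 * dY U p) := by
  have hL := contDiff_euclLap hU
  have hD : ContDiff ℝ (⊤ : ℕ∞) (dY U) := contDiff_dirDeriv hU (eY n)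
  have h1 : euclLap (wLap b U) p = _ := euclLap_add_inv hL hD b hp
  have h2 : dY (wLap b U) p = dY (euclLap U) p + b * (p.2)⁻¹ * dY (dY U) p
      - b * (1 : ℝ) * ((p.2)⁻¹ * (p.2)⁻¹) * dY U p := dirDeriv_add_inv hL hD b (eY n) hp
  rw [dY_euclLap hU] at h2
  rw [wLap, h1, h2]
  ring

/-- The swap identity `Δ_a(Δ_b U) = Δ_{b+2}(Δ_{a−2} U)` on the upper half-space; in
particular `Δ_m(Δ_m U) = Δ_{m+2}(Δ_{m−2} U)` for every real `m`. -/
theorem wLap_swap (n : ℕ) (a b : ℝ) (U : UHS n → ℝ) (hU : ContDiff ℝ (⊤ : ℕ∞) U)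
    (p : UHS n) (hp : 0 < p.2) :
    wLap a (wLap b U) p = wLap (b + 2) (wLap (a - 2) U) p ∧
      ∀ m : ℝ, wLap m (wLap m U) p = wLap (m + 2) (wLap (m - 2) U) p := by
  have swap (a b : ℝ) : wLap a (wLap b U) p = wLap (b + 2) (wLap (a - 2) U) p := by
    rw [wLap_wLap a b hU hp, wLap_wLap (b + 2) (a - 2) hU hp]
    ring
  exact ⟨swap a b, fun m => swap m m⟩
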